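/- Let θ ∈ (0, 1/2] be such that θ⁻¹ ≥ 2 is an integer, and let U : S_{T[θ,S₁]} → S_{T[θ,S₁]} be a surjective isometry of the unit sphere of T[θ, S₁]. Then there exist a sequence (ε_i)_{i=1}^∞ with values in {−1, 1} and a permutation π of {1, 2, …, θ⁻¹} such that for every x ∈ S_{T[θ,S₁]} with basis expansion x = Σ_{i=1}^∞ a_i e_i one has U(x) = Σ_{i=1}^{θ⁻¹} ε_i a_i e_{π(i)} + Σ_{i=θ⁻¹+1}^∞ ε_i a_i e_i. -/

import Mathlib

open scoped BigOperators

noncomputable section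

/-- Projection of a finitely supported vector onto the coordinates in `E`. -/
def tsProj (E : Finset ℕ+) (x : ℕ+ →₀ ℝ) : ℕ+ →₀ ℝ :=
  x.filter fun i => i ∈ E

/-- The Schreier families `S_n` on the positive integers:
`S₁` consists of the sets `F` with `|F| ≤ min F` (together with `∅`), and `S_{n+1}`
consists of unions `F₁ ∪ ⋯ ∪ F_d` of nonempty members `F₁ < ⋯ < F_d` of `S_n`
with `d ≤ min F₁` (together with `∅`). -/
def Schreier : ℕ → Set (Finset ℕ+)
  | 0 => {F | F.card ≤ 1}
  | 1 => {F | ∀ a ∈ F, F.card ≤ (a : ℕ)}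
  | n + 2 =>
      {F | F = ∅ ∨
        ∃ (d : ℕ) (G : Fin d → Finset ℕ+),
          0 < d ∧ (∀ i, G i ∈ Schreier (n + 1)) ∧ (∀ i, (G i).Nonempty) ∧
          (∀ i j : Fin d, i < j → ∀ a ∈ G i, ∀ b ∈ G j, a < b) ∧
          (∀ i, ∀ a ∈ G i, d ≤ (a : ℕ)) ∧ F = Finset.univ.biUnion G}

/-- A tuple of nonempty finite sets `E 0 < E 1 < ⋯` whose set of minima belongs to `S`. -/
def TsAdmissible (S : Set (Finset ℕ+)) {d : ℕ} (E : Fin d → Finset ℕ+) : Prop :=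
  (∀ i, (E i).Nonempty) ∧
  (∀ i j : Fin d, i < j → ∀ a ∈ E i, ∀ b ∈ E j, a < b) ∧
  ∃ μ : Fin d → ℕ+, (∀ i, IsLeast (↑(E i) : Set ℕ+) (μ i)) ∧
    Finset.univ.image μ ∈ S

/-- The iterated norms `‖·‖_m` in the construction of the Tsirelson norm:
`‖x‖₀` is the supremum norm and
`‖x‖_{m+1} = max(‖x‖_m, sup{θ ∑ᵢ ‖Eᵢ x‖_m : E₁ < ⋯ < E_d, {min Eᵢ} ∈ S})`. -/
def tnormAux (θ : ℝ) (S : Set (Finset ℕ+)) : ℕ → (ℕ+ →₀ ℝ) → ℝ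
  | 0, x => ⨆ i, |x i|
  | m + 1, x =>
      max (tnormAux θ S m x)
        (sSup {r : ℝ | ∃ (d : ℕ) (E : Fin d → Finset ℕ+), TsAdmissible S E ∧
          r = θ * ∑ i, tnormAux θ S m (tsProj (E i) x)})

/-- The Tsirelson norm `‖x‖_{θ,S} = sup_m ‖x‖_m` on `c₀₀`. -/
def tnorm (θ : ℝ) (S : Set (Finset ℕ+)) (x : ℕ+ →₀ ℝ) : ℝ :=
  ⨆ m : ℕ, tnormAux θ S m x

/-- `X`, together with the sequence `e` of unit vectors, is (a realization of) the
Tsirelson space `T[θ, S_n]`: a Banach space containing `c₀₀` isometrically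
(w.r.t. the Tsirelson norm) as a dense subspace, in which `(e i)` is a
(1-unconditional) basis, i.e. every `x` has a unique expansion `x = ∑ᵢ aᵢ eᵢ`. -/
structure IsTsirelsonSpace (θ : ℝ) (n : ℕ) (X : Type*) [NormedAddCommGroup X]
    [NormedSpace ℝ X] (e : ℕ+ → X) : Prop where
  complete : CompleteSpace X
  norm_embed : ∀ a : ℕ+ →₀ ℝ, ‖a.sum fun i c => c • e i‖ = tnorm θ (Schreier n) a
  dense_embed : DenseRange fun a : ℕ+ →₀ ℝ => a.sum fun i c => c • e i
  expansion : ∀ x : X, ∃! a : ℕ+ → ℝ, HasSum (fun i => a i • e i) x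

/-!
The points `±eᵢ` of the unit sphere are characterised by distances well enough to force
`U (-eᵢ) = -U eᵢ`. Hence the unit vectors `U eᵢ` have pairwise sums and differences of norm at
most `1`. Subtracting a coordinatewise cluster point `w` leaves vectors that escape to infinity
and so can replace any one block of an admissible family; averaging over the replaced block shows
that every `U eᵢ` has a coordinate of modulus `1`, that is, `U eᵢ = ±e_{π i}`. The distances from
`x` to the points at distance `2` from `±eᵢ` recover the coordinates of `x`, so `U` acts by a
signed permutation.

For `i > θ⁻¹` the vector `∑_{i ≤ k < 2i} e_k` has norm at least `θ i > 1`, whereas a sum of `i`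
basis vectors one of which has index less than `i` has norm at most `max 1 (θ (i - 1))`. Thus
`i ≤ π i`, and the same for `π⁻¹` gives `π i = i`.
-/

section Pole

open Metric

variable {E F : Type*} [NormedAddCommGroup E] [NormedAddCommGroup F] [NormedSpace ℝ F]

lemma dist_le_two_of_mem_sphere (x y : sphere (0 : E) 1) : dist x y ≤ 2 := by
  have h := norm_sub_le (x : E) y
  rw [norm_eq_of_mem_sphere, norm_eq_of_mem_sphere, one_add_one_eq_two] at h
  rwa [Subtype.dist_eq, dist_eq_norm]

lemma dist_neg_self_of_mem_sphere (x : sphere (0 : F) 1) : dist (-x) x = 2 := by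
  rw [Subtype.dist_eq, dist_eq_norm, coe_neg_sphere, ← neg_add', norm_neg, ← two_smul ℝ,
    norm_smul, norm_eq_of_mem_sphere, Real.norm_two, mul_one]

lemma dist_neg_left_sphere (x y : sphere (0 : E) 1) : dist (-x) y = dist x (-y) := by
  rw [Subtype.dist_eq, Subtype.dist_eq, coe_neg_sphere, coe_neg_sphere, ← dist_neg_neg, neg_neg]

lemma abs_coe_unitSphere (σ : sphere (0 : ℝ) 1) : |(σ : ℝ)| = 1 :=
  norm_eq_of_mem_sphere σ

lemma abs_add_coe_unitSphere (σ : sphere (0 : ℝ) 1) {s : ℝ} (hs : |s| ≤ 1) :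
    |s + σ| = 1 + σ * s := by
  have hs' := abs_le.1 hs
  obtain h | h := eq_or_eq_neg_of_abs_eq (abs_coe_unitSphere σ) <;> rw [h]
  · rw [abs_of_nonneg (by linarith)]
    ring
  · rw [abs_of_nonpos (by linarith)]
    ring

lemma neg_one_smul_sphere (x : sphere (0 : F) 1) : (-1 : sphere (0 : ℝ) 1) • x = -x :=
  Subtype.ext (neg_one_smul ℝ (x : F))

lemma sphere_smul_smul (σ τ : sphere (0 : ℝ) 1) (x : sphere (0 : F) 1) :
    σ • τ • x = (σ * τ) • x :=
  Subtype.ext (smul_smul (σ : ℝ) τ (x : F))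

/-- A pole of the unit sphere is a point `b` whose position relative to `-b` is expressed by
distances alone to such an extent that surjective isometries of the sphere respect `-b`. -/
structure IsPole (b : sphere (0 : E) 1) : Prop where
  dist_eq_two : ∀ y z, dist y b = 2 → dist z (-b) = 2 → dist y z = 2
  dist_le_one : ∀ y, dist y (-b) = 2 → dist y b ≤ 1
  eq_neg : ∀ z, dist z b = 2 → (∀ y, dist y b = 2 → dist y z ≤ 1) → z = -b

lemma IsPole.map_neg {b : sphere (0 : E) 1} (hb : IsPole b)
    (U : sphere (0 : E) 1 ≃ᵢ sphere (0 : F) 1) : U (-b) = -U b := by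
  have hanti (y : sphere (0 : E) 1) : dist (U.symm (-U y)) y = 2 := by
    rw [← U.dist_eq, U.apply_symm_apply, dist_neg_self_of_mem_sphere]
  have hswap (y z : sphere (0 : E) 1) : dist (U.symm (-U y)) z = dist y (U.symm (-U z)) := by
    rw [← U.dist_eq, ← U.dist_eq y, U.apply_symm_apply, U.apply_symm_apply,
      dist_neg_left_sphere]
  rw [← hb.eq_neg (U.symm (-U b)) (hanti b), U.apply_symm_apply]
  intro y hy
  rw [← hswap]
  refine hb.dist_le_one _ ?_
  rw [hswap]
  exact hb.dist_eq_two _ _ hy (hanti (-b))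

end Pole

section PeakSystem

open Metric Function

variable {ι κ X Y : Type*} [DecidableEq ι] [DecidableEq κ] [NormedAddCommGroup X]
  [NormedSpace ℝ X] [NormedAddCommGroup Y] [NormedSpace ℝ Y]

/-- A system of vectors `e i` with coordinate functionals under which the norm behaves, near each
`e i`, like a supremum norm: the properties of the basis of a Tsirelson space with `θ ≤ 1 / 2`
that matter for isometries of the unit sphere. -/
structure IsPeakSystem (e : ι → X) (coord : X →ₗ[ℝ] ι → ℝ) : Prop where
  injective : Injective coord
  coord_basis : ∀ i, coord (e i) = Pi.single i 1
  abs_coord_le : ∀ x i, |coord x i| ≤ ‖x‖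
  norm_sub_le : ∀ x i, ‖x - coord x i • e i‖ ≤ ‖x‖
  norm_smul_add_smul_le : ∀ i j, i ≠ j → ∀ s t : ℝ, |s| = 1 → |t| = 1 → ‖s • e i + t • e j‖ ≤ 1
  norm_add_smul_le : ∀ x i t, ‖x + t • e i‖ ≤ max |coord x i + t| (‖x‖ + |t| / 2)

namespace IsPeakSystem

variable {e : ι → X} {coord : X →ₗ[ℝ] ι → ℝ} (he : IsPeakSystem e coord)

lemma abs_coord_sub_le_dist (he : IsPeakSystem e coord) (x y : sphere (0 : X) 1) (i : ι) :
    |coord x i - coord y i| ≤ dist x y := by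
  rw [Subtype.dist_eq, dist_eq_norm, ← Pi.sub_apply, ← map_sub]
  exact he.abs_coord_le _ i

lemma abs_coord_le_one (he : IsPeakSystem e coord) (x : sphere (0 : X) 1) (i : ι) :
    |coord x i| ≤ 1 :=
  (he.abs_coord_le x i).trans_eq (norm_eq_of_mem_sphere x)

lemma norm_basis (he : IsPeakSystem e coord) (i : ι) : ‖e i‖ = 1 := by
  refine le_antisymm ?_ ?_
  · have h := he.norm_add_smul_le 0 i 1
    norm_num at h
    exact h
  · simpa [he.coord_basis] using he.abs_coord_le (e i) i

/-- The basis vector `e i` as a point of the unit sphere. -/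
def unit (he : IsPeakSystem e coord) (i : ι) : sphere (0 : X) 1 :=
  ⟨e i, mem_sphere_zero_iff_norm.2 (he.norm_basis i)⟩

lemma coord_smul_unit (σ : sphere (0 : ℝ) 1) (i : ι) :
    coord ↑(σ • he.unit i) = Pi.single i (σ : ℝ) := by
  change coord ((σ : ℝ) • e i) = _
  rw [map_smul, he.coord_basis, ← Pi.single_smul, smul_eq_mul, mul_one]

lemma index_eq_of_smul_unit_eq {σ τ : sphere (0 : ℝ) 1} {i j : ι}
    (h : σ • he.unit i = τ • he.unit j) : i = j := by
  have hi := congrArg (fun x : sphere (0 : X) 1 => coord x i) h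
  simp only [coord_smul_unit, Pi.single_eq_same] at hi
  by_contra hij
  rw [Pi.single_eq_of_ne hij] at hi
  exact ne_zero_of_mem_unit_sphere σ hi

lemma dist_smul_unit_eq_two_iff (σ : sphere (0 : ℝ) 1) (i : ι) (y : sphere (0 : X) 1) :
    dist y (σ • he.unit i) = 2 ↔ coord y i = -σ := by
  have hσ := abs_coe_unitSphere σ
  constructor
  · intro h
    have hmax := he.norm_add_smul_le y i (-σ)
    rw [neg_smul, ← sub_eq_add_neg, ← sub_eq_add_neg, abs_neg, hσ, norm_eq_of_mem_sphere] at hmax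
    change dist (y : X) ((σ : ℝ) • e i) = 2 at h
    rw [← dist_eq_norm, h] at hmax
    have hfar : 2 ≤ |coord y i - σ| := (le_max_iff.1 hmax).resolve_right (by norm_num)
    have hy := abs_le.1 (he.abs_coord_le_one y i)
    obtain hσ | hσ := eq_or_eq_neg_of_abs_eq hσ <;> rw [hσ] at hfar ⊢ <;>
      obtain h' | h' := le_abs.1 hfar <;> linarith
  · intro h
    have hdist := he.abs_coord_sub_le_dist y (σ • he.unit i) i
    rw [h, coord_smul_unit, Pi.single_eq_same, ← neg_add', abs_neg, ← two_mul, abs_mul, hσ,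
      abs_two, mul_one] at hdist
    exact (dist_le_two_of_mem_sphere _ _).antisymm hdist

lemma dist_smul_unit_le_one {σ : sphere (0 : ℝ) 1} {i : ι} {y : sphere (0 : X) 1}
    (hy : coord y i = σ) : dist y (σ • he.unit i) ≤ 1 := by
  have h := he.norm_sub_le y i
  rw [hy, norm_eq_of_mem_sphere] at h
  rwa [Subtype.dist_eq, dist_eq_norm]

lemma exists_coord_eq_coord_eq (he : IsPeakSystem e coord) (σ τ : sphere (0 : ℝ) 1) {i j : ι}
    (hij : i ≠ j) : ∃ y : sphere (0 : X) 1, coord y i = σ ∧ coord y j = τ := by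
  have hσ := abs_coe_unitSphere σ
  let y : X := (σ : ℝ) • e i + (τ : ℝ) • e j
  have hyi : coord y i = σ := by simp [y, he.coord_basis, hij]
  have hyj : coord y j = τ := by simp [y, he.coord_basis, hij.symm]
  refine ⟨⟨y, mem_sphere_zero_iff_norm.2 (le_antisymm ?_ ?_)⟩, hyi, hyj⟩
  · exact he.norm_smul_add_smul_le i j hij σ τ hσ (abs_coe_unitSphere τ)
  · rw [← hσ, ← hyi]
    exact he.abs_coord_le y i

lemma eq_smul_unit_of_dist_le_one {σ : sphere (0 : ℝ) 1} {i : ι} {z : sphere (0 : X) 1}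
    (hz : coord z i = σ) (hdist : ∀ y : sphere (0 : X) 1, coord y i = σ → dist y z ≤ 1) :
    z = σ • he.unit i := by
  refine Subtype.ext (he.injective (funext fun j => ?_))
  rw [coord_smul_unit]
  obtain rfl | hij := eq_or_ne i j
  · rw [hz, Pi.single_eq_same]
  have hj (τ : sphere (0 : ℝ) 1) : |(τ : ℝ) - coord z j| ≤ 1 := by
    obtain ⟨y, hyi, hyj⟩ := he.exists_coord_eq_coord_eq σ τ hij
    rw [← hyj]
    exact (he.abs_coord_sub_le_dist y z j).trans (hdist y hyi)
  have hpos := (abs_le.1 (hj 1)).2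
  have hneg := (abs_le.1 (hj (-1))).1
  rw [unitSphere.coe_one] at hpos
  rw [coe_neg_sphere, unitSphere.coe_one] at hneg
  rw [Pi.single_eq_of_ne hij.symm]
  linarith

lemma isPole_unit (i : ι) : IsPole (he.unit i) := by
  have hfar (y : sphere (0 : X) 1) : dist y (he.unit i) = 2 ↔ coord y i = -1 := by
    simpa using he.dist_smul_unit_eq_two_iff 1 i y
  have hneg := (neg_one_smul_sphere (he.unit i)).symm
  have hfar' (y : sphere (0 : X) 1) : dist y (-he.unit i) = 2 ↔ coord y i = 1 := by
    simpa [hneg] using he.dist_smul_unit_eq_two_iff (-1) i y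
  refine ⟨fun y z hy hz => ?_, fun y hy => ?_, fun z hz hdist => ?_⟩
  · refine (dist_le_two_of_mem_sphere y z).antisymm (le_of_eq_of_le ?_
      (he.abs_coord_sub_le_dist y z i))
    rw [(hfar y).1 hy, (hfar' z).1 hz]
    norm_num
  · simpa using he.dist_smul_unit_le_one (σ := 1) (by simpa using (hfar' y).1 hy)
  · rw [hneg]
    refine he.eq_smul_unit_of_dist_le_one (by simpa using (hfar z).1 hz) fun y hy => ?_
    exact hdist y ((hfar y).2 (by simpa using hy))

lemma exists_dist_le_one_add_posPart (σ : sphere (0 : ℝ) 1) (i : ι) (x : sphere (0 : X) 1) :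
    ∃ w : sphere (0 : X) 1, dist w (σ • he.unit i) = 2 ∧
      dist x w ≤ 1 + (σ * coord x i)⁺ := by
  have hσ := abs_coe_unitSphere σ
  set s := coord x i with hs
  let q : X := (2⁻¹ : ℝ) • (x - s • e i)
  have hq : ‖q‖ ≤ 2⁻¹ := by
    have h := he.norm_sub_le x i
    rw [norm_eq_of_mem_sphere] at h
    rw [norm_smul, Real.norm_of_nonneg (by norm_num)]
    linarith
  have hqi : coord q i = 0 := by simp [q, he.coord_basis, hs]
  have hbound (t : ℝ) : ‖q + t • e i‖ ≤ max |t| (2⁻¹ + |t| / 2) := by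
    refine (he.norm_add_smul_le q i t).trans ?_
    rw [hqi, zero_add]
    gcongr
  have hcoord : coord (q + (-σ : ℝ) • e i) i = -σ := by simp [hqi, he.coord_basis]
  have hnorm : ‖q + (-σ : ℝ) • e i‖ = 1 := by
    refine le_antisymm ((hbound _).trans_eq ?_) ?_
    · rw [abs_neg, hσ]
      norm_num
    · refine le_of_eq_of_le ?_ (he.abs_coord_le _ i)
      rw [hcoord, abs_neg, hσ]
  refine ⟨⟨_, mem_sphere_zero_iff_norm.2 hnorm⟩, (he.dist_smul_unit_eq_two_iff σ i _).2 hcoord, ?_⟩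
  have hsub : (x : X) - (q + (-σ : ℝ) • e i) = q + (s + σ) • e i := by
    simp only [q]
    module
  have hsσ : |s + σ| = 1 + σ * s := abs_add_coe_unitSphere σ (he.abs_coord_le_one x i)
  rw [Subtype.dist_eq, dist_eq_norm, hsub]
  refine (hbound _).trans (max_le ?_ ?_) <;> rw [hsσ]
  · gcongr
    exact le_posPart _
  · linarith [le_posPart (σ * s), posPart_nonneg (σ * s)]

variable {f : κ → Y} {coord' : Y →ₗ[ℝ] κ → ℝ} (hf : IsPeakSystem f coord')
  {U : sphere (0 : X) 1 ≃ᵢ sphere (0 : Y) 1} {σ τ : sphere (0 : ℝ) 1} {i : ι} {j : κ}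

lemma map_smul_unit (U : sphere (0 : X) 1 ≃ᵢ sphere (0 : Y) 1) (σ : sphere (0 : ℝ) 1) (i : ι) :
    U (σ • he.unit i) = σ • U (he.unit i) := by
  obtain hσ | hσ := eq_or_eq_neg_of_abs_eq (abs_coe_unitSphere σ)
  · obtain rfl : σ = 1 := Subtype.ext hσ
    rw [one_smul, one_smul]
  · obtain rfl : σ = -1 := Subtype.ext hσ
    rw [neg_one_smul_sphere, neg_one_smul_sphere, (he.isPole_unit i).map_neg]

lemma map_unit_eq_smul_unit (h : coord' (U (he.unit i)) j = σ) :
    U (he.unit i) = σ • hf.unit j := by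
  refine hf.eq_smul_unit_of_dist_le_one h fun y hy => ?_
  have hfar : dist y (U (-he.unit i)) = 2 := by
    refine (dist_le_two_of_mem_sphere _ _).antisymm (le_of_eq_of_le ?_
      (hf.abs_coord_sub_le_dist _ _ j))
    rw [(he.isPole_unit i).map_neg, coe_neg_sphere, map_neg, Pi.neg_apply, h, hy,
      sub_neg_eq_add, ← two_mul, abs_mul, abs_two, abs_coe_unitSphere, mul_one]
  obtain ⟨x, rfl⟩ := U.surjective y
  rw [U.dist_eq] at hfar ⊢
  exact (he.isPole_unit i).dist_le_one x hfar

lemma dist_map_unit_smul_map_unit_le_one (he : IsPeakSystem e coord)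
    (U : sphere (0 : X) 1 ≃ᵢ sphere (0 : Y) 1) (σ : sphere (0 : ℝ) 1) {i i' : ι} (hi : i ≠ i') :
    dist (U (he.unit i)) (σ • U (he.unit i')) ≤ 1 := by
  rw [← he.map_smul_unit, U.dist_eq, Subtype.dist_eq, dist_eq_norm]
  change ‖e i - (σ : ℝ) • e i'‖ ≤ 1
  have h := he.norm_smul_add_smul_le i i' hi 1 (-σ) abs_one (by rw [abs_neg, abs_coe_unitSphere])
  rwa [one_smul, neg_smul, ← sub_eq_add_neg] at h

lemma index_eq_of_map_unit_eq {i' : ι} (h : U (he.unit i) = σ • hf.unit j)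
    (h' : U.symm (hf.unit j) = τ • he.unit i') : i = i' := by
  refine he.index_eq_of_smul_unit_eq (σ := 1) (τ := σ * τ) ?_
  rw [one_smul, ← sphere_smul_smul, ← h', ← hf.map_smul_unit, ← h, U.symm_apply_apply]

lemma posPart_mul_coord_map_le (h : U (σ • he.unit i) = τ • hf.unit j) (x : sphere (0 : X) 1) :
    (τ * coord' (U x) j)⁺ ≤ (σ * coord x i)⁺ := by
  obtain ⟨w, hw, hxw⟩ := he.exists_dist_le_one_add_posPart σ i x
  rw [← U.dist_eq, h, hf.dist_smul_unit_eq_two_iff] at hw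
  have hdist := (hf.abs_coord_sub_le_dist (U x) (U w) j).trans_eq (U.dist_eq x w)
  rw [hw, sub_neg_eq_add] at hdist
  refine sup_le ?_ (posPart_nonneg _)
  obtain hτ | hτ := eq_or_eq_neg_of_abs_eq (abs_coe_unitSphere τ) <;> rw [hτ] at hdist ⊢ <;>
    linarith [abs_le.1 hdist]

lemma coord_map_eq_mul_coord (h : U (he.unit i) = σ • hf.unit j) (x : sphere (0 : X) 1) :
    coord' (U x) j = σ * coord x i := by
  have hmap (ρ : sphere (0 : ℝ) 1) : U (ρ • he.unit i) = (ρ * σ) • hf.unit j := by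
    rw [map_smul_unit, h, sphere_smul_smul]
  have hsymm (ρ : sphere (0 : ℝ) 1) : U.symm ((ρ * σ) • hf.unit j) = ρ • he.unit i := by
    rw [← hmap, U.symm_apply_apply]
  have hpart (ρ : sphere (0 : ℝ) 1) : (ρ * (σ * coord' (U x) j))⁺ = (ρ * coord x i)⁺ := by
    refine le_antisymm ?_ ?_
    · simpa [mul_assoc] using he.posPart_mul_coord_map_le hf (hmap ρ) x
    · simpa [mul_assoc] using hf.posPart_mul_coord_map_le he (hsymm ρ) (U x)
  have heq : σ * coord' (U x) j = coord x i :=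
    posPart_negPart_inj.1 ⟨by simpa using hpart 1, by simpa using hpart (-1)⟩
  rw [← heq, ← mul_assoc, ← abs_mul_abs_self, abs_coe_unitSphere, one_mul, one_mul]

end IsPeakSystem

/-- The isometry `U` of unit spheres permutes the vectors `e i` up to signs. -/
def ActsBySignedPerm {e : ι → X} {coord : X →ₗ[ℝ] ι → ℝ} (he : IsPeakSystem e coord)
    {f : κ → Y} {coord' : Y →ₗ[ℝ] κ → ℝ} (hf : IsPeakSystem f coord')
    (U : sphere (0 : X) 1 ≃ᵢ sphere (0 : Y) 1) (σ : ι → sphere (0 : ℝ) 1) (π : ι ≃ κ) : Prop :=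
  ∀ i, U (he.unit i) = σ i • hf.unit (π i)

namespace ActsBySignedPerm

variable {e : ι → X} {coord : X →ₗ[ℝ] ι → ℝ} {he : IsPeakSystem e coord}
  {f : κ → Y} {coord' : Y →ₗ[ℝ] κ → ℝ} {hf : IsPeakSystem f coord'}
  {U : sphere (0 : X) 1 ≃ᵢ sphere (0 : Y) 1} {σ : ι → sphere (0 : ℝ) 1} {π : ι ≃ κ}

lemma symm_apply_unit (h : ActsBySignedPerm he hf U σ π) (i : ι) :
    U.symm (hf.unit (π i)) = σ i • he.unit i := by
  have hσ : σ i * σ i = 1 := Subtype.ext <| by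
    rw [unitSphere.coe_mul, ← abs_mul_abs_self, abs_coe_unitSphere, one_mul, unitSphere.coe_one]
  rw [U.symm_apply_eq, he.map_smul_unit, h, sphere_smul_smul, hσ, one_smul]

lemma symm (h : ActsBySignedPerm he hf U σ π) :
    ActsBySignedPerm hf he U.symm (σ ∘ π.symm) π.symm := fun j => by
  simpa using h.symm_apply_unit (π.symm j)

lemma coord_apply (h : ActsBySignedPerm he hf U σ π) (x : sphere (0 : X) 1) (i : ι) :
    coord' (U x) (π i) = σ i * coord x i :=
  he.coord_map_eq_mul_coord hf (h i) x

end ActsBySignedPerm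

lemma IsPeakSystem.exists_actsBySignedPerm {e : ι → X} {coord : X →ₗ[ℝ] ι → ℝ}
    (he : IsPeakSystem e coord) {f : κ → Y} {coord' : Y →ₗ[ℝ] κ → ℝ} (hf : IsPeakSystem f coord')
    {U : sphere (0 : X) 1 ≃ᵢ sphere (0 : Y) 1}
    (hU : ∀ i, ∃ j, |coord' (U (he.unit i)) j| = 1)
    (hUsymm : ∀ j, ∃ i, |coord (U.symm (hf.unit j)) i| = 1) :
    ∃ σ π, ActsBySignedPerm he hf U σ π := by
  choose p hp using hU
  let σ (i : ι) : sphere (0 : ℝ) 1 := ⟨_, mem_sphere_zero_iff_norm.2 (hp i)⟩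
  have hUσ (i : ι) : U (he.unit i) = σ i • hf.unit (p i) := he.map_unit_eq_smul_unit hf rfl
  choose q hq using hUsymm
  let τ (j : κ) : sphere (0 : ℝ) 1 := ⟨_, mem_sphere_zero_iff_norm.2 (hq j)⟩
  have hUτ (j : κ) : U.symm (hf.unit j) = τ j • he.unit (q j) := hf.map_unit_eq_smul_unit he rfl
  exact ⟨σ, ⟨p, q, fun i => (he.index_eq_of_map_unit_eq hf (hUσ i) (hUτ (p i))).symm,
    fun j => (hf.index_eq_of_map_unit_eq he (hUτ j) (hUσ (q j))).symm⟩, hUσ⟩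

end PeakSystem

section TsirelsonNorm

open Finset Filter Function Topology

variable {θ c : ℝ} {S : Set (Finset ℕ+)} {d : ℕ} {E : Fin d → Finset ℕ+}

lemma TsAdmissible.pairwise_disjoint (hE : TsAdmissible S E) : Pairwise (Disjoint on E) := by
  refine (pairwise_disjoint_on E).2 fun i j hij => disjoint_left.2 fun a ha ha' => ?_
  exact lt_irrefl a (hE.2.1 i j hij a ha a ha')

lemma sum_sum_inter_le_sum {ι κ : Type*} [Fintype κ] [DecidableEq ι] {E : κ → Finset ι}
    (hE : Pairwise (Disjoint on E)) (A : Finset ι) {f : ι → ℝ} (hf : ∀ i, 0 ≤ f i) :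
    ∑ l, ∑ i ∈ E l ∩ A, f i ≤ ∑ i ∈ A, f i := by
  rw [← sum_biUnion fun l _ m _ hlm => (hE hlm).mono inter_subset_left inter_subset_left]
  exact sum_le_sum_of_subset_of_nonneg (biUnion_subset.2 fun _ _ => inter_subset_right)
    fun i _ _ => hf i

lemma tsProj_apply (A : Finset ℕ+) (x : ℕ+ →₀ ℝ) (i : ℕ+) :
    tsProj A x i = if i ∈ A then x i else 0 :=
  Finsupp.filter_apply _ _ _

lemma abs_tsProj_le (A : Finset ℕ+) (x : ℕ+ →₀ ℝ) (i : ℕ+) : |tsProj A x i| ≤ |x i| := by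
  rw [tsProj_apply]
  split_ifs <;> simp

lemma tsProj_comm (A B : Finset ℕ+) (x : ℕ+ →₀ ℝ) :
    tsProj A (tsProj B x) = tsProj B (tsProj A x) := by
  ext i
  simp only [tsProj_apply]
  split_ifs <;> rfl

/-- The `ℓ₁`-norm on `c₀₀`; it dominates every Tsirelson norm with `θ ≤ 1`, which is what makes
the suprema defining those norms finite. -/
def l1Norm (x : ℕ+ →₀ ℝ) : ℝ := ∑ i ∈ x.support, |x i|

lemma l1Norm_nonneg (x : ℕ+ →₀ ℝ) : 0 ≤ l1Norm x :=
  sum_nonneg fun _ _ => abs_nonneg _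

lemma abs_apply_le_l1Norm (x : ℕ+ →₀ ℝ) (i : ℕ+) : |x i| ≤ l1Norm x := by
  by_cases hi : i ∈ x.support
  · exact single_le_sum (f := fun i => |x i|) (fun _ _ => abs_nonneg _) hi
  · rw [Finsupp.notMem_support_iff.1 hi, abs_zero]
    exact l1Norm_nonneg x

lemma l1Norm_tsProj (A : Finset ℕ+) (x : ℕ+ →₀ ℝ) :
    l1Norm (tsProj A x) = ∑ i ∈ A ∩ x.support, |x i| := by
  have hsupp : (tsProj A x).support = A ∩ x.support := by
    ext i
    simp [tsProj_apply]
  rw [l1Norm, hsupp]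
  exact sum_congr rfl fun i hi => by rw [tsProj_apply, if_pos (mem_inter.1 hi).1]

lemma sum_l1Norm_tsProj_le (hE : TsAdmissible S E) (x : ℕ+ →₀ ℝ) :
    ∑ l, l1Norm (tsProj (E l) x) ≤ l1Norm x := by
  simp only [l1Norm_tsProj]
  exact sum_sum_inter_le_sum hE.pairwise_disjoint _ fun _ => abs_nonneg _

lemma tnormAux_nonneg (m : ℕ) (x : ℕ+ →₀ ℝ) : 0 ≤ tnormAux θ S m x := by
  induction m with
  | zero => exact Real.iSup_nonneg fun _ => abs_nonneg _
  | succ m ih => exact le_max_of_le_left ih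

lemma monotone_tnormAux (x : ℕ+ →₀ ℝ) : Monotone fun m => tnormAux θ S m x :=
  monotone_nat_of_le_succ fun _ => le_max_left _ _

lemma mul_sum_tsProj_le_l1Norm (hθ : θ ≤ 1) (hE : TsAdmissible S E) {N : (ℕ+ →₀ ℝ) → ℝ}
    (hN0 : ∀ x, 0 ≤ N x) (hN : ∀ x, N x ≤ l1Norm x) (x : ℕ+ →₀ ℝ) :
    θ * ∑ l, N (tsProj (E l) x) ≤ l1Norm x :=
  calc θ * ∑ l, N (tsProj (E l) x)
      ≤ ∑ l, N (tsProj (E l) x) := mul_le_of_le_one_left (sum_nonneg fun _ _ => hN0 _) hθ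
    _ ≤ ∑ l, l1Norm (tsProj (E l) x) := sum_le_sum fun _ _ => hN _
    _ ≤ l1Norm x := sum_l1Norm_tsProj_le hE x

lemma tnormAux_le_l1Norm (hθ : θ ≤ 1) (m : ℕ) (x : ℕ+ →₀ ℝ) : tnormAux θ S m x ≤ l1Norm x := by
  induction m generalizing x with
  | zero => exact ciSup_le (abs_apply_le_l1Norm x)
  | succ m ih =>
    refine max_le (ih x) (Real.sSup_le ?_ (l1Norm_nonneg x))
    rintro _ ⟨d, E, hE, rfl⟩
    exact mul_sum_tsProj_le_l1Norm hθ hE (tnormAux_nonneg m) ih x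

lemma mul_sum_tnormAux_le (hθ : θ ≤ 1) (hE : TsAdmissible S E) (m : ℕ) (x : ℕ+ →₀ ℝ) :
    θ * ∑ l, tnormAux θ S m (tsProj (E l) x) ≤ tnormAux θ S (m + 1) x := by
  refine le_max_of_le_right (le_csSup ⟨l1Norm x, ?_⟩ ⟨d, E, hE, rfl⟩)
  rintro _ ⟨d', E', hE', rfl⟩
  exact mul_sum_tsProj_le_l1Norm hθ hE' (tnormAux_nonneg m) (tnormAux_le_l1Norm hθ m) x

lemma bddAbove_range_tnormAux (hθ : θ ≤ 1) (x : ℕ+ →₀ ℝ) :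
    BddAbove (Set.range fun m => tnormAux θ S m x) :=
  ⟨l1Norm x, Set.forall_mem_range.2 fun m => tnormAux_le_l1Norm hθ m x⟩

lemma tnormAux_le_tnorm (hθ : θ ≤ 1) (m : ℕ) (x : ℕ+ →₀ ℝ) : tnormAux θ S m x ≤ tnorm θ S x :=
  le_ciSup (bddAbove_range_tnormAux hθ x) m

lemma tnorm_le_l1Norm (hθ : θ ≤ 1) (x : ℕ+ →₀ ℝ) : tnorm θ S x ≤ l1Norm x :=
  ciSup_le fun m => tnormAux_le_l1Norm hθ m x

lemma bddAbove_range_abs (x : ℕ+ →₀ ℝ) : BddAbove (Set.range fun i => |x i|) :=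
  ⟨l1Norm x, Set.forall_mem_range.2 (abs_apply_le_l1Norm x)⟩

lemma abs_apply_le_tnorm (hθ : θ ≤ 1) (x : ℕ+ →₀ ℝ) (i : ℕ+) : |x i| ≤ tnorm θ S x :=
  (le_ciSup (bddAbove_range_abs x) i).trans (tnormAux_le_tnorm hθ 0 x)

lemma mul_sum_tnorm_le (hθ : θ ≤ 1) (hE : TsAdmissible S E) (x : ℕ+ →₀ ℝ) :
    θ * ∑ l, tnorm θ S (tsProj (E l) x) ≤ tnorm θ S x := by
  have hlim (y : ℕ+ →₀ ℝ) :
      Tendsto (fun m => tnormAux θ S m y) atTop (𝓝 (tnorm θ S y)) :=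
    tendsto_atTop_ciSup (monotone_tnormAux y) (bddAbove_range_tnormAux hθ y)
  exact le_of_tendsto' ((tendsto_finsetSum univ fun l _ => hlim (tsProj (E l) x)).const_mul θ)
    fun m => (mul_sum_tnormAux_le hθ hE m x).trans (tnormAux_le_tnorm hθ (m + 1) x)

lemma tnormAux_le_of_abs_le (hθ0 : 0 ≤ θ) (hθ : θ ≤ 1) (m : ℕ) {x y : ℕ+ →₀ ℝ}
    (h : ∀ i, |x i| ≤ |y i|) : tnormAux θ S m x ≤ tnormAux θ S m y := by
  induction m generalizing x y with
  | zero => exact ciSup_mono (bddAbove_range_abs y) h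
  | succ m ih =>
    refine max_le ((ih h).trans (monotone_tnormAux y m.le_succ))
      (Real.sSup_le ?_ (tnormAux_nonneg _ _))
    rintro _ ⟨d, E, hE, rfl⟩
    have hproj (l : Fin d) (i : ℕ+) : |tsProj (E l) x i| ≤ |tsProj (E l) y i| := by
      simp only [tsProj_apply]
      split_ifs
      exacts [h i, le_rfl]
    calc θ * ∑ l, tnormAux θ S m (tsProj (E l) x)
        ≤ θ * ∑ l, tnormAux θ S m (tsProj (E l) y) := by
          gcongr with l
          exact ih (hproj l)
      _ ≤ tnormAux θ S (m + 1) y := mul_sum_tnormAux_le hθ hE m y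

lemma tnorm_le_of_abs_le (hθ0 : 0 ≤ θ) (hθ : θ ≤ 1) {x y : ℕ+ →₀ ℝ} (h : ∀ i, |x i| ≤ |y i|) :
    tnorm θ S x ≤ tnorm θ S y :=
  ciSup_le fun m => (tnormAux_le_of_abs_le hθ0 hθ m h).trans (tnormAux_le_tnorm hθ m y)

/-- Families of length `d ≤ θ⁻¹` may be disregarded: they average at most `d` numbers bounded
by `c`. -/
lemma tnorm_le_of_long (hθ0 : 0 ≤ θ) (hθ : θ ≤ 1) {x : ℕ+ →₀ ℝ} (hx : ∀ i, |x i| ≤ c)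
    (hlong : ∀ (d : ℕ) (E : Fin d → Finset ℕ+), TsAdmissible S E → 1 < θ * d →
      θ * ∑ l, tnorm θ S (tsProj (E l) x) ≤ c) :
    tnorm θ S x ≤ c := by
  have hc : 0 ≤ c := (abs_nonneg _).trans (hx 1)
  refine ciSup_le fun m => ?_
  induction m generalizing x with
  | zero => exact ciSup_le hx
  | succ m ih =>
    refine max_le (ih hx hlong) (Real.sSup_le ?_ hc)
    rintro _ ⟨d, E, hE, rfl⟩
    rcases lt_or_ge 1 (θ * d) with hd | hd
    · refine le_trans ?_ (hlong d E hE hd)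
      gcongr
      exact tnormAux_le_tnorm hθ _ _
    have hterm (l : Fin d) : tnormAux θ S m (tsProj (E l) x) ≤ c := by
      refine ih (fun i => (abs_tsProj_le _ _ i).trans (hx i)) fun d' E' hE' hd' => ?_
      refine le_trans ?_ (hlong d' E' hE' hd')
      gcongr with j
      rw [tsProj_comm]
      exact tnorm_le_of_abs_le hθ0 hθ (abs_tsProj_le _ _)
    calc θ * ∑ l, tnormAux θ S m (tsProj (E l) x)
        ≤ θ * ∑ _l : Fin d, c := by gcongr with l; exact hterm l
      _ = θ * d * c := by simp [mul_assoc]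
      _ ≤ c := mul_le_of_le_one_left hc hd

end TsirelsonNorm

section Schreier

open Finset

variable {d : ℕ}

lemma tsAdmissible_schreier_one_iff {E : Fin d → Finset ℕ+} :
    TsAdmissible (Schreier 1) E ↔ (∀ l, (E l).Nonempty) ∧
      (∀ l m : Fin d, l < m → ∀ a ∈ E l, ∀ b ∈ E m, a < b) ∧ ∀ l, ∀ a ∈ E l, d ≤ (a : ℕ) := by
  refine and_congr_right fun hne => and_congr_right fun hlt => ⟨?_, fun hd => ?_⟩
  · rintro ⟨μ, hμ, hS⟩ l a ha
    have hmono : StrictMono μ := fun l m hlm => hlt l m hlm _ (hμ l).1 _ (hμ m).1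
    have hcard := hS (μ l) (mem_image_of_mem μ (mem_univ l))
    rw [card_image_of_injective _ hmono.injective, card_fin] at hcard
    exact hcard.trans ((hμ l).2 ha)
  · refine ⟨fun l => (E l).min' (hne l), fun l => isLeast_min' _ _, fun a ha => ?_⟩
    obtain ⟨l, -, rfl⟩ := mem_image.1 ha
    exact (card_image_le.trans_eq (card_fin d)).trans (hd l _ (min'_mem _ _))

lemma TsAdmissible.snoc_succAbove {E : Fin (d + 1) → Finset ℕ+}
    (hE : TsAdmissible (Schreier 1) E) (l : Fin (d + 1)) {R : Finset ℕ+} (hR : R.Nonempty)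
    (hER : ∀ i, ∀ a ∈ E i, ∀ b ∈ R, a < b) :
    TsAdmissible (Schreier 1)
      (Fin.snoc (fun i => E (l.succAbove i)) R : Fin (d + 1) → Finset ℕ+) := by
  rw [tsAdmissible_schreier_one_iff] at hE ⊢
  obtain ⟨hne, hlt, hd⟩ := hE
  refine ⟨Fin.lastCases (by simpa using hR) fun i => by simpa using hne _,
    fun i j hij => ?_, Fin.lastCases ?_ fun i => by simpa using hd _⟩
  · obtain ⟨i, rfl⟩ := i.eq_castSucc_of_ne_last (hij.trans_le (Fin.le_last j)).ne
    refine Fin.lastCases ?_ (fun j hij => ?_) j hij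
    · simpa using hER (l.succAbove i)
    · simpa using hlt _ _ (Fin.strictMono_succAbove l (Fin.castSucc_lt_castSucc_iff.1 hij))
  · obtain ⟨a, ha⟩ := hne l
    intro b hb
    rw [Fin.snoc_last] at hb
    exact (hd l a ha).trans (hER l a ha b hb).le

end Schreier

namespace IsTsirelsonSpace

open Finset Filter Function Topology

variable {θ : ℝ} {X : Type*} [NormedAddCommGroup X] [NormedSpace ℝ X] {e : ℕ+ → X}

section Coordinates

variable {n : ℕ}

/-- The coordinates of a vector with respect to the basis `e`, as a linear map into the space of
all sequences. -/
def coord (hX : IsTsirelsonSpace θ n X e) : X →ₗ[ℝ] ℕ+ → ℝ where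
  toFun x := (hX.expansion x).choose
  map_add' x y := (hX.expansion (x + y)).unique (hX.expansion _).choose_spec.1 <| by
    simpa only [Pi.add_apply, add_smul] using
      (hX.expansion x).choose_spec.1.add (hX.expansion y).choose_spec.1
  map_smul' t x := (hX.expansion (t • x)).unique (hX.expansion _).choose_spec.1 <| by
    simpa only [Pi.smul_apply, smul_assoc, RingHom.id_apply] using
      (hX.expansion x).choose_spec.1.const_smul t

/-- The coordinate projection onto the span of `e i`, `i ∈ A`; it extends `tsProj A` from `c₀₀`
to the whole space. -/
def proj (hX : IsTsirelsonSpace θ n X e) (A : Finset ℕ+) : X →ₗ[ℝ] X :=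
  ∑ i ∈ A, (LinearMap.proj i ∘ₗ hX.coord).smulRight (e i)

variable (hX : IsTsirelsonSpace θ n X e)

lemma hasSum_coord (x : X) : HasSum (fun i => hX.coord x i • e i) x :=
  (hX.expansion x).choose_spec.1

lemma coord_eq_of_hasSum {a : ℕ+ → ℝ} {x : X} (h : HasSum (fun i => a i • e i) x) :
    hX.coord x = a :=
  (hX.expansion x).unique (hX.hasSum_coord x) h

lemma coord_injective : Injective hX.coord := fun x y hxy =>
  (hX.hasSum_coord x).unique (hxy ▸ hX.hasSum_coord y)

lemma coord_sum_smul (A : Finset ℕ+) (a : ℕ+ → ℝ) (i : ℕ+) :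
    hX.coord (∑ j ∈ A, a j • e j) i = if i ∈ A then a i else 0 := by
  refine congrFun (hX.coord_eq_of_hasSum (a := fun j => if j ∈ A then a j else 0) ?_) i
  simp only [ite_smul, zero_smul]
  simpa only [sum_ite_mem, inter_self] using
    hasSum_sum_of_ne_finset_zero (f := fun i => if i ∈ A then a i • e i else 0)
      fun i hi => if_neg hi

lemma coord_basis (i : ℕ+) : hX.coord (e i) = Pi.single i 1 := by
  ext j
  simpa only [sum_singleton, one_smul, mem_singleton, Pi.single_apply] using
    hX.coord_sum_smul {i} (fun _ => 1) j

lemma proj_apply (A : Finset ℕ+) (x : X) : hX.proj A x = ∑ i ∈ A, hX.coord x i • e i := by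
  simp [proj]

lemma proj_sum_smul (A B : Finset ℕ+) (a : ℕ+ → ℝ) :
    hX.proj A (∑ i ∈ B, a i • e i) = ∑ i ∈ A ∩ B, a i • e i := by
  simp only [proj_apply, coord_sum_smul, ite_smul, zero_smul, sum_ite_mem]

lemma proj_proj (A B : Finset ℕ+) (x : X) : hX.proj A (hX.proj B x) = hX.proj (A ∩ B) x := by
  simp only [hX.proj_apply B, hX.proj_apply (A ∩ B), proj_sum_smul]

lemma tendsto_proj (x : X) : Tendsto (fun A => hX.proj A x) atTop (𝓝 x) := by
  simpa only [proj_apply, HasSum, SummationFilter.unconditional_filter] using hX.hasSum_coord x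

lemma norm_sum_smul (hX : IsTsirelsonSpace θ n X e) (A : Finset ℕ+) (a : ℕ+ → ℝ) :
    ‖∑ i ∈ A, a i • e i‖ = tnorm θ (Schreier n) (Finsupp.indicator A fun i _ => a i) := by
  rw [← hX.norm_embed, Finsupp.sum_of_support_subset _ (Finsupp.support_indicator_subset _ _) _
    fun i _ => zero_smul ℝ (e i)]
  exact congrArg _ (sum_congr rfl fun i hi => by rw [Finsupp.indicator_of_mem hi])

lemma tsProj_indicator (A B : Finset ℕ+) (a : ℕ+ → ℝ) :
    tsProj A (Finsupp.indicator B fun i _ => a i) =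
      Finsupp.indicator (A ∩ B) fun i _ => a i := by
  ext i
  simp only [tsProj_apply, Finsupp.indicator_apply, mem_inter, ite_and, dite_eq_ite]

lemma norm_sum_smul_inter (hX : IsTsirelsonSpace θ n X e) (A B : Finset ℕ+) (a : ℕ+ → ℝ) :
    ‖∑ i ∈ A ∩ B, a i • e i‖ =
      tnorm θ (Schreier n) (tsProj A (Finsupp.indicator B fun i _ => a i)) := by
  rw [tsProj_indicator, hX.norm_sum_smul]

lemma norm_sum_smul_le_of_abs_le (hθ0 : 0 ≤ θ) (hθ : θ ≤ 1) {A : Finset ℕ+} {a : ℕ+ → ℝ} {x : X}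
    (h : ∀ i ∈ A, |a i| ≤ |hX.coord x i|) : ‖∑ i ∈ A, a i • e i‖ ≤ ‖x‖ := by
  refine ge_of_tendsto (hX.tendsto_proj x).norm ?_
  filter_upwards [eventually_ge_atTop A] with B hAB
  rw [proj_apply, hX.norm_sum_smul, hX.norm_sum_smul]
  refine tnorm_le_of_abs_le hθ0 hθ fun i => ?_
  simp only [Finsupp.indicator_apply, dite_eq_ite]
  split_ifs with hiA hiB hiB
  exacts [h i hiA, (hiB (hAB hiA)).elim, by simp, le_rfl]

lemma norm_proj_le (hθ0 : 0 ≤ θ) (hθ : θ ≤ 1) (A : Finset ℕ+) (x : X) : ‖hX.proj A x‖ ≤ ‖x‖ := by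
  rw [proj_apply]
  exact hX.norm_sum_smul_le_of_abs_le hθ0 hθ fun _ _ => le_rfl

lemma norm_le_norm_of_abs_coord_le (hθ0 : 0 ≤ θ) (hθ : θ ≤ 1) {x y : X}
    (h : ∀ i, |hX.coord x i| ≤ |hX.coord y i|) : ‖x‖ ≤ ‖y‖ := by
  refine le_of_tendsto' (hX.tendsto_proj x).norm fun A => ?_
  rw [proj_apply]
  exact hX.norm_sum_smul_le_of_abs_le hθ0 hθ fun i _ => h i

lemma norm_basis (hX : IsTsirelsonSpace θ n X e) (hθ : θ ≤ 1) (i : ℕ+) : ‖e i‖ = 1 := by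
  have h := hX.norm_sum_smul {i} fun _ => 1
  simp only [sum_singleton, one_smul, Finsupp.indicator_singleton] at h
  rw [h]
  refine le_antisymm ((tnorm_le_l1Norm hθ _).trans_eq ?_)
    (le_of_eq_of_le ?_ (abs_apply_le_tnorm hθ _ i))
  · simp [l1Norm]
  · simp

lemma abs_coord_le_norm (hθ0 : 0 ≤ θ) (hθ : θ ≤ 1) (x : X) (i : ℕ+) : |hX.coord x i| ≤ ‖x‖ := by
  have h := hX.norm_sum_smul_le_of_abs_le hθ0 hθ (A := {i}) (x := x) fun _ _ => le_rfl
  rwa [sum_singleton, norm_smul, hX.norm_basis hθ, mul_one] at h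

lemma mul_sum_norm_proj_le (hθ0 : 0 ≤ θ) (hθ : θ ≤ 1) {d : ℕ} {E : Fin d → Finset ℕ+}
    (hE : TsAdmissible (Schreier n) E) (x : X) :
    θ * ∑ l, ‖hX.proj (E l) x‖ ≤ ‖x‖ := by
  let B := univ.biUnion E
  have hEB (l : Fin d) : E l ∩ B = E l := inter_eq_left.2 (subset_biUnion_of_mem E (mem_univ l))
  calc θ * ∑ l, ‖hX.proj (E l) x‖
      = θ * ∑ l, tnorm θ (Schreier n)
          (tsProj (E l) (Finsupp.indicator B fun i _ => hX.coord x i)) := by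
        simp only [← hX.norm_sum_smul_inter, hEB, proj_apply]
    _ ≤ ‖hX.proj B x‖ := by
        rw [proj_apply, hX.norm_sum_smul]
        exact mul_sum_tnorm_le hθ hE _
    _ ≤ ‖x‖ := hX.norm_proj_le hθ0 hθ B x

lemma norm_le_of_long (hθ0 : 0 ≤ θ) (hθ : θ ≤ 1) {x : X} {c : ℝ} (hx : ∀ i, |hX.coord x i| ≤ c)
    (hlong : ∀ (d : ℕ) (E : Fin d → Finset ℕ+), TsAdmissible (Schreier n) E → 1 < θ * d →
      θ * ∑ l, ‖hX.proj (E l) x‖ ≤ c) : ‖x‖ ≤ c := by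
  refine le_of_tendsto' (hX.tendsto_proj x).norm fun B => ?_
  rw [proj_apply, hX.norm_sum_smul]
  refine tnorm_le_of_long hθ0 hθ (fun i => ?_) fun d E hE hd => ?_
  · rw [Finsupp.indicator_apply, dite_eq_ite]
    split_ifs
    exacts [hx i, abs_zero.trans_le ((abs_nonneg _).trans (hx i))]
  · refine le_trans ?_ (hlong d E hE hd)
    gcongr with l
    rw [← hX.norm_sum_smul_inter, inter_comm, ← proj_apply, ← proj_proj]
    exact hX.norm_proj_le hθ0 hθ B _

lemma sum_norm_proj_sum_smul_le (hθ : θ ≤ 1) {κ : Type*} [Fintype κ] {E : κ → Finset ℕ+}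
    (hE : Pairwise (Disjoint on E)) (A : Finset ℕ+) (a : ℕ+ → ℝ) :
    ∑ l, ‖hX.proj (E l) (∑ i ∈ A, a i • e i)‖ ≤ ∑ i ∈ A, |a i| := by
  refine (sum_le_sum fun l _ => ?_).trans (sum_sum_inter_le_sum hE A fun i => abs_nonneg (a i))
  rw [proj_sum_smul]
  exact norm_sum_le_of_le _ fun i _ => by
    rw [norm_smul, hX.norm_basis hθ, mul_one, Real.norm_eq_abs]

lemma norm_sum_smul_le_of_mul_sum_abs_le (hX : IsTsirelsonSpace θ n X e) (hθ0 : 0 ≤ θ)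
    (hθ : θ ≤ 1) {A : Finset ℕ+} {a : ℕ+ → ℝ} {c : ℝ} (hc : 0 ≤ c) (hsup : ∀ i ∈ A, |a i| ≤ c)
    (hsum : θ * ∑ i ∈ A, |a i| ≤ c) : ‖∑ i ∈ A, a i • e i‖ ≤ c := by
  refine hX.norm_le_of_long hθ0 hθ (fun i => ?_) fun d E hE _ => le_trans ?_ hsum
  · rw [coord_sum_smul]
    split_ifs with hi
    exacts [hsup i hi, abs_zero.trans_le hc]
  · gcongr
    exact hX.sum_norm_proj_sum_smul_le hθ hE.pairwise_disjoint A a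

lemma two_mul_mul_sum_norm_proj_le (hθ0 : 0 ≤ θ) (hθ : θ ≤ 1) {d : ℕ} {E : Fin d → Finset ℕ+}
    (hE : TsAdmissible (Schreier n) E) (x w : X) :
    2 * (θ * ∑ l, ‖hX.proj (E l) x‖) ≤ θ * ∑ l, ‖hX.proj (E l) (x + w)‖ + ‖x - w‖ :=
  calc 2 * (θ * ∑ l, ‖hX.proj (E l) x‖)
      = θ * ∑ l, ‖hX.proj (E l) (x + w) + hX.proj (E l) (x - w)‖ := by
        simp only [← map_add, add_add_sub_cancel, ← two_smul ℝ, map_smul, norm_smul,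
          Real.norm_two, ← mul_sum, mul_left_comm]
    _ ≤ θ * (∑ l, ‖hX.proj (E l) (x + w)‖ + ∑ l, ‖hX.proj (E l) (x - w)‖) := by
        rw [← sum_add_distrib]
        gcongr
        exact norm_add_le _ _
    _ ≤ θ * ∑ l, ‖hX.proj (E l) (x + w)‖ + ‖x - w‖ := by
        rw [mul_add]
        gcongr
        exact hX.mul_sum_norm_proj_le hθ0 hθ hE (x - w)

lemma norm_add_smul_le (hθ0 : 0 ≤ θ) (hθ : θ ≤ 1) (x : X) (i : ℕ+) (t : ℝ) :
    ‖x + t • e i‖ ≤ max |hX.coord x i + t| (‖x‖ + θ * |t|) := by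
  refine hX.norm_le_of_long hθ0 hθ (fun j => ?_) fun d E hE _ => le_max_of_le_right ?_
  · rw [map_add, map_smul, coord_basis, Pi.add_apply, Pi.smul_apply, smul_eq_mul]
    obtain rfl | hji := eq_or_ne j i
    · simp
    · rw [Pi.single_eq_of_ne hji, mul_zero, add_zero]
      refine le_max_of_le_right ((hX.abs_coord_le_norm hθ0 hθ x j).trans ?_)
      exact le_add_of_nonneg_right (by positivity)
  · have hbasis : ∑ l, ‖hX.proj (E l) (t • e i)‖ ≤ |t| := by
      simpa using hX.sum_norm_proj_sum_smul_le hθ hE.pairwise_disjoint {i} fun _ => t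
    calc θ * ∑ l, ‖hX.proj (E l) (x + t • e i)‖
        ≤ θ * ∑ l, (‖hX.proj (E l) x‖ + ‖hX.proj (E l) (t • e i)‖) := by
          gcongr with l
          rw [map_add]
          exact norm_add_le _ _
      _ = θ * ∑ l, ‖hX.proj (E l) x‖ + θ * ∑ l, ‖hX.proj (E l) (t • e i)‖ := by
          rw [sum_add_distrib, mul_add]
      _ ≤ ‖x‖ + θ * |t| := by
          gcongr
          exact hX.mul_sum_norm_proj_le hθ0 hθ hE x

lemma tendsto_proj_of_tendsto_coord {ι : Type*} {l : Filter ι} {u : ι → X} {x : X}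
    (h : Tendsto (fun k => hX.coord (u k)) l (𝓝 (hX.coord x))) (A : Finset ℕ+) :
    Tendsto (fun k => hX.proj A (u k)) l (𝓝 (hX.proj A x)) := by
  simp only [proj_apply]
  exact tendsto_finsetSum A fun i _ => (tendsto_pi_nhds.1 h i).smul_const (e i)

lemma norm_le_of_tendsto_coord (hθ0 : 0 ≤ θ) (hθ : θ ≤ 1) {ι : Type*} {l : Filter ι} [NeBot l]
    {u : ι → X} {x : X} {C : ℝ} (h : Tendsto (fun k => hX.coord (u k)) l (𝓝 (hX.coord x)))
    (hu : ∀ᶠ k in l, ‖u k‖ ≤ C) : ‖x‖ ≤ C := by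
  refine le_of_tendsto' (hX.tendsto_proj x).norm fun A => ?_
  exact le_of_tendsto (hX.tendsto_proj_of_tendsto_coord h A).norm
    (hu.mono fun k hk => (hX.norm_proj_le hθ0 hθ A (u k)).trans hk)

lemma exists_forall_abs_coord_le (hθ : θ ≤ 1) (x : X) :
    ∃ i, ∀ j, |hX.coord x j| ≤ |hX.coord x i| := by
  by_cases h : ∃ i, 0 < |hX.coord x i|
  · obtain ⟨i, hi⟩ := h
    have hzero := (hX.hasSum_coord x).summable.tendsto_cofinite_zero.norm
    simp only [norm_smul, hX.norm_basis hθ, mul_one, Real.norm_eq_abs, norm_zero] at hzero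
    rw [← cocompact_eq_cofinite] at hzero
    exact continuous_of_discreteTopology.exists_forall_ge' i
      ((hzero.eventually (gt_mem_nhds hi)).mono fun _ => le_of_lt)
  · push Not at h
    exact ⟨1, fun j => (h j).trans (abs_nonneg _)⟩

end Coordinates

section SchreierOne

variable (hX : IsTsirelsonSpace θ 1 X e)

lemma exists_tsAdmissible_of_not_summable (hX : IsTsirelsonSpace θ 1 X e) {w : ℕ+ → ℝ}
    (hw : ¬ Summable fun i => w i • e i) :
    ∃ ε > 0, ∀ d : ℕ, ∃ E : Fin d → Finset ℕ+, TsAdmissible (Schreier 1) E ∧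
      ∀ l, ε ≤ ‖∑ i ∈ E l, w i • e i‖ := by
  have := hX.complete
  rw [summable_iff_vanishing_norm] at hw
  push Not at hw
  obtain ⟨ε, hε, hblock⟩ := hw
  refine ⟨ε, hε, fun d => ?_⟩
  have hnext (s : Finset (Finset ℕ+)) : ∃ B : Finset ℕ+,
      ((∀ b ∈ B, d ≤ (b : ℕ)) ∧ ε ≤ ‖∑ i ∈ B, w i • e i‖) ∧
        ∀ A ∈ s, ∀ a ∈ A, ∀ b ∈ B, a < b := by
    obtain ⟨B, hB, hεB⟩ := hblock (Icc 1 d.succPNat ∪ s.biUnion fun A => A.biUnion (Icc 1))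
    simp only [disjoint_union_right, disjoint_biUnion_right] at hB
    refine ⟨B, ⟨fun b hb => ?_, hεB⟩, fun A hA a ha b hb => ?_⟩
    · have hb' := disjoint_left.1 hB.1 hb
      rw [mem_Icc, not_and, imp_iff_right one_le, not_le] at hb'
      exact d.le_succ.trans (PNat.coe_lt_coe _ _ |>.2 hb').le
    · have hb' := disjoint_left.1 (hB.2 A hA a ha) hb
      rwa [mem_Icc, not_and, imp_iff_right one_le, not_le] at hb'
  obtain ⟨E, hE, hlt⟩ := exists_seq_of_forall_finset_exists _ _ fun s _ => hnext s
  refine ⟨fun l => E l, tsAdmissible_schreier_one_iff.2 ⟨fun l => ?_,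
    fun l m hlm => hlt l m hlm, fun l => (hE l).1⟩, fun l => (hE l).2⟩
  refine nonempty_of_ne_empty fun hl => hε.not_ge ?_
  simpa [hl] using (hE l).2

/-- The basis is boundedly complete: a bounded divergent series would contain, for each `d`,
`d` successive blocks beyond `d` of norm bounded below, hence partial sums of norm at least a
multiple of `θ * d`. -/
lemma exists_coord_eq (hX : IsTsirelsonSpace θ 1 X e) (hθ0 : 0 < θ) (hθ : θ ≤ 1) {w : ℕ+ → ℝ}
    {C : ℝ} (hw : ∀ A : Finset ℕ+, ‖∑ i ∈ A, w i • e i‖ ≤ C) : ∃ x, hX.coord x = w := by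
  suffices hs : Summable fun i => w i • e i from hs.imp fun x => hX.coord_eq_of_hasSum
  by_contra hs
  obtain ⟨ε, hε, hblocks⟩ := hX.exists_tsAdmissible_of_not_summable hs
  obtain ⟨d, hd⟩ := exists_nat_gt (C / (θ * ε))
  obtain ⟨E, hE, hεE⟩ := hblocks d
  let B := univ.biUnion E
  have hproj (l : Fin d) : hX.proj (E l) (∑ i ∈ B, w i • e i) = ∑ i ∈ E l, w i • e i := by
    rw [proj_sum_smul, inter_eq_left.2 (subset_biUnion_of_mem E (mem_univ l))]
  refine hd.not_ge ((le_div_iff₀ (by positivity)).2 ?_)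
  calc d * (θ * ε) = θ * ∑ _l : Fin d, ε := by simp; ring
    _ ≤ θ * ∑ l, ‖hX.proj (E l) (∑ i ∈ B, w i • e i)‖ := by
        gcongr with l
        rw [hproj]
        exact hεE l
    _ ≤ ‖∑ i ∈ B, w i • e i‖ := hX.mul_sum_norm_proj_le hθ0.le hθ hE _
    _ ≤ C := hw B

lemma exists_tendsto_coord (hX : IsTsirelsonSpace θ 1 X e) (hθ0 : 0 < θ) (hθ : θ ≤ 1)
    {ι : Type*} (l : Ultrafilter ι) {v : ι → X} {C : ℝ} (hv : ∀ k, ‖v k‖ ≤ C) :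
    ∃ w, Tendsto (fun k => hX.coord (v k)) l (𝓝 (hX.coord w)) := by
  have hbox (k : ι) : hX.coord (v k) ∈ Set.univ.pi fun _ : ℕ+ => Set.Icc (-C) C := fun i _ =>
    abs_le.1 ((hX.abs_coord_le_norm hθ0.le hθ (v k) i).trans (hv k))
  obtain ⟨w, -, hw⟩ := (isCompact_univ_pi fun _ => isCompact_Icc).ultrafilter_le_nhds
    (l.map fun k => hX.coord (v k)) (tendsto_principal.2 (Eventually.of_forall hbox))
  have hlim (A : Finset ℕ+) :
      Tendsto (fun k => hX.proj A (v k)) l (𝓝 (∑ i ∈ A, w i • e i)) := by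
    simp only [proj_apply]
    exact tendsto_finsetSum A fun i _ => (tendsto_pi_nhds.1 hw i).smul_const (e i)
  obtain ⟨x, rfl⟩ := hX.exists_coord_eq hθ0 hθ fun A => le_of_tendsto' (hlim A).norm fun k =>
    (hX.norm_proj_le hθ0.le hθ A (v k)).trans (hv k)
  exact ⟨x, hw⟩

lemma mul_sum_norm_proj_succAbove_add_le (hθ0 : 0 ≤ θ) (hθ : θ ≤ 1) {d : ℕ}
    {E : Fin (d + 1) → Finset ℕ+} (hE : TsAdmissible (Schreier 1) E) (l : Fin (d + 1))
    {H : Finset ℕ+} (hH : ∀ i, ∀ a ∈ E i, ∀ b ∉ H, a < b) (x : X) :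
    θ * (∑ i, ‖hX.proj (E (l.succAbove i)) x‖ + ‖x - hX.proj H x‖) ≤ ‖x‖ := by
  have hlim := ((hX.tendsto_proj x).sub_const (hX.proj H x)).norm
  refine le_of_tendsto ((hlim.const_add _).const_mul θ) ?_
  obtain ⟨b, hb⟩ := Infinite.exists_notMem_finset H
  filter_upwards [eventually_ge_atTop (insert b H)] with B hB
  have hHB : H ⊆ B := (subset_insert b H).trans hB
  have hR : (B \ H).Nonempty := ⟨b, mem_sdiff.2 ⟨hB (mem_insert_self b H), hb⟩⟩
  have hsub : hX.proj B x - hX.proj H x = hX.proj (B \ H) x := by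
    simp only [proj_apply, sum_sdiff_eq_sub hHB]
  have hadm := hE.snoc_succAbove l hR fun i a ha b hb => hH i a ha b (mem_sdiff.1 hb).2
  simpa only [hsub, Fin.sum_univ_castSucc, Fin.snoc_castSucc, Fin.snoc_last] using
    hX.mul_sum_norm_proj_le hθ0 hθ hadm x

/-- In the limit `u → 0` coordinatewise, `u k` is carried by a block beyond `E`, which may take
the place of any `E l` in an admissible family. -/
lemma mul_sum_norm_proj_succAbove_add_le_of_tendsto (hθ0 : 0 ≤ θ) (hθ : θ ≤ 1) {ι : Type*}
    {f : Filter ι} [NeBot f] {u : ι → X} (hu : Tendsto (fun k => hX.coord (u k)) f (𝓝 0))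
    {a C : ℝ} {z : X} (ha : ∀ k, a ≤ ‖u k‖) (hC : ∀ᶠ k in f, ‖z + u k‖ ≤ C) {d : ℕ}
    {E : Fin (d + 1) → Finset ℕ+} (hE : TsAdmissible (Schreier 1) E) (l : Fin (d + 1)) :
    θ * (∑ i, ‖hX.proj (E (l.succAbove i)) z‖ + a) ≤ C := by
  have hlimH : Tendsto (fun H => ‖z - hX.proj H z‖) atTop (𝓝 0) := by
    simpa only [sub_self, norm_zero] using ((hX.tendsto_proj z).const_sub z).norm
  have hlim := ((tendsto_const_nhds (x := a)).sub hlimH).const_add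
    (∑ i, ‖hX.proj (E (l.succAbove i)) z‖)
  rw [sub_zero] at hlim
  refine le_of_tendsto (hlim.const_mul θ) ?_
  filter_upwards [eventually_ge_atTop ((univ.biUnion E).biUnion (Icc 1))] with H hH
  have hEH : ∀ i, ∀ a ∈ E i, ∀ b ∉ H, a < b := fun i a ha b hb => by
    by_contra! hba
    exact hb (hH (mem_biUnion.2 ⟨a, mem_biUnion.2 ⟨i, mem_univ i, ha⟩,
      mem_Icc.2 ⟨one_le, hba⟩⟩))
  have hproj (A : Finset ℕ+) : Tendsto (fun k => hX.proj A (u k)) f (𝓝 0) := by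
    rw [← map_zero (hX.proj A)]
    exact hX.tendsto_proj_of_tendsto_coord (by rwa [map_zero]) A
  have hlimE : Tendsto (fun k => ∑ i, ‖hX.proj (E (l.succAbove i)) (z + u k)‖) f
      (𝓝 (∑ i, ‖hX.proj (E (l.succAbove i)) z‖)) := by
    refine tendsto_finsetSum univ fun i _ => ?_
    simpa only [map_add, add_zero] using ((hproj (E (l.succAbove i))).const_add _).norm
  have hlimR : Tendsto (fun k => a - ‖z - hX.proj H z‖ - ‖hX.proj H (u k)‖) f
      (𝓝 (a - ‖z - hX.proj H z‖)) := by
    simpa only [norm_zero, sub_zero] using (hproj H).norm.const_sub _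
  refine le_of_tendsto ((hlimE.add hlimR).const_mul θ) ?_
  filter_upwards [hC] with k hk
  refine le_trans ?_ ((hX.mul_sum_norm_proj_succAbove_add_le hθ0 hθ hE l hEH (z + u k)).trans hk)
  gcongr
  have hsplit : u k = (z + u k - hX.proj H (z + u k)) - (z - hX.proj H z) + hX.proj H (u k) := by
    rw [map_add]
    abel
  have hnorm : ‖u k‖ ≤ ‖z + u k - hX.proj H (z + u k)‖ + ‖z - hX.proj H z‖ + ‖hX.proj H (u k)‖ :=
    (congrArg norm hsplit).trans_le ((norm_add_le _ _).trans (by gcongr; exact norm_sub_le _ _))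
  linarith [ha k]

lemma mul_sum_norm_proj_add_le_of_tendsto (hθ0 : 0 ≤ θ) (hθ : θ ≤ 1) {ι : Type*}
    {f : Filter ι} [NeBot f] {u : ι → X} (hu : Tendsto (fun k => hX.coord (u k)) f (𝓝 0))
    {a C : ℝ} {z : X} (ha : ∀ k, a ≤ ‖u k‖) (hC : ∀ᶠ k in f, ‖z + u k‖ ≤ C) {d : ℕ}
    {E : Fin d → Finset ℕ+} (hE : TsAdmissible (Schreier 1) E) :
    (d - 1) * (θ * ∑ i, ‖hX.proj (E i) z‖) + d * (θ * a) ≤ d * C := by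
  obtain _ | d := d
  · simp
  have hsum : ∑ l : Fin (d + 1), ∑ i, ‖hX.proj (E (l.succAbove i)) z‖ =
      d * ∑ i, ‖hX.proj (E i) z‖ := by
    have hl (l : Fin (d + 1)) := Fin.sum_univ_succAbove (fun i => ‖hX.proj (E i) z‖) l
    have htotal := sum_congr rfl fun l (_ : l ∈ univ) => hl l
    rw [sum_add_distrib, sum_const, card_fin, nsmul_eq_mul] at htotal
    push_cast at htotal
    linarith
  have h := sum_le_sum fun l (_ : l ∈ univ) =>
    hX.mul_sum_norm_proj_succAbove_add_le_of_tendsto hθ0 hθ hu ha hC hE l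
  rw [← mul_sum, sum_add_distrib, hsum, sum_const, sum_const, card_fin, nsmul_eq_mul,
    nsmul_eq_mul] at h
  push_cast at h ⊢
  linarith

lemma exists_pos_forall_one_le_mul_sub (hθ0 : 0 < θ) :
    ∃ δ > 0, ∀ d : ℕ, 1 < θ * d → 1 ≤ d * (θ - 2 * δ) := by
  let k := ⌊θ⁻¹⌋₊ + 1
  have hk : (0 : ℝ) < k := by positivity
  have hkθ : (k : ℝ)⁻¹ < θ := inv_lt_of_inv_lt₀ hθ0 (mod_cast Nat.lt_floor_add_one θ⁻¹)
  refine ⟨(θ - (k : ℝ)⁻¹) / 2, half_pos (sub_pos.2 hkθ), fun d hd => ?_⟩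
  have hdθ : θ⁻¹ < d := (inv_lt_iff_one_lt_mul₀' hθ0).2 hd
  have hkd : (k : ℝ) ≤ d := mod_cast (Nat.floor_lt (inv_nonneg.2 hθ0.le)).2 hdθ
  rw [mul_div_cancel₀ _ two_ne_zero, sub_sub_cancel, ← div_eq_mul_inv]
  exact (one_le_div₀ hk).2 hkd

lemma exists_abs_coord_eq_one_of_tendsto (hθ0 : 0 < θ) (hθ : θ ≤ 1) {ι : Type*}
    {f : Filter ι} [NeBot f] {u : ι → X} (hu : Tendsto (fun k => hX.coord (u k)) f (𝓝 0))
    (hu1 : ∀ k, 1 ≤ ‖u k‖) {x w : X} (hx : ‖x‖ = 1) (hxw : ‖x - w‖ ≤ 1)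
    (hxu : ∀ᶠ k in f, ‖x + w + u k‖ ≤ 1) : ∃ i, |hX.coord x i| = 1 := by
  obtain ⟨i, hi⟩ := hX.exists_forall_abs_coord_le hθ x
  refine ⟨i, le_antisymm ((hX.abs_coord_le_norm hθ0.le hθ x i).trans_eq hx) ?_⟩
  by_contra! hlt
  obtain ⟨δ₀, hδ₀, hδd⟩ := exists_pos_forall_one_le_mul_sub hθ0
  obtain ⟨δ, hδ, hδδ₀, hδi⟩ : ∃ δ > 0, δ ≤ δ₀ ∧ δ ≤ 1 - |hX.coord x i| :=
    ⟨min δ₀ (1 - |hX.coord x i|), lt_min hδ₀ (sub_pos.2 hlt), min_le_left _ _, min_le_right _ _⟩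
  obtain ⟨d, E, hE, hd, hEx⟩ : ∃ (d : ℕ) (E : Fin d → Finset ℕ+), TsAdmissible (Schreier 1) E ∧
      1 < θ * d ∧ 1 - δ < θ * ∑ l, ‖hX.proj (E l) x‖ := by
    by_contra! hshort
    have hsup (j : ℕ+) : |hX.coord x j| ≤ 1 - δ := (hi j).trans (le_sub_comm.1 hδi)
    linarith [hX.norm_le_of_long hθ0.le hθ hsup hshort]
  have hadd : 1 - 2 * δ ≤ θ * ∑ l, ‖hX.proj (E l) (x + w)‖ := by
    linarith [hX.two_mul_mul_sum_norm_proj_le hθ0.le hθ hE x w]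
  have hlim := hX.mul_sum_norm_proj_add_le_of_tendsto hθ0.le hθ hu hu1 hxu hE
  have hd1 : (1 : ℝ) ≤ d := hd.le.trans (mul_le_of_le_one_left d.cast_nonneg hθ)
  have hdδ : 1 ≤ d * (θ - 2 * δ) := (hδd d hd).trans (by gcongr)
  linarith [mul_le_mul_of_nonneg_left hadd (sub_nonneg.2 hd1)]

/-- If `w` is a coordinatewise cluster point of the `v k`, then `‖v r ± w‖ ≤ 1`, while
`v k - w` tends to `0` coordinatewise and has norm at least `1` because
`2 * v k = (v k + w) + (v k - w)`. -/
lemma exists_abs_coord_eq_one (hθ0 : 0 < θ) (hθ : θ ≤ 1) {ι : Type*} [Infinite ι] {v : ι → X}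
    (hv : ∀ k, ‖v k‖ = 1) (hadd : Pairwise fun k m => ‖v k + v m‖ ≤ 1)
    (hsub : Pairwise fun k m => ‖v k - v m‖ ≤ 1) (r : ι) : ∃ i, |hX.coord (v r) i| = 1 := by
  obtain ⟨w, hw⟩ := hX.exists_tendsto_coord hθ0 hθ (hyperfilter ι) fun k => (hv k).le
  have hne (k : ι) : ∀ᶠ m in hyperfilter ι, k ≠ m :=
    (eventually_cofinite_ne k).filter_mono hyperfilter_le_cofinite |>.mono fun _ => Ne.symm
  have haddw (k : ι) : ‖v k + w‖ ≤ 1 := by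
    refine hX.norm_le_of_tendsto_coord hθ0.le hθ (u := fun m => v k + v m) ?_
      ((hne k).mono fun m hm => hadd hm)
    simpa only [map_add] using hw.const_add _
  have hsubw (k : ι) : ‖v k - w‖ ≤ 1 := by
    refine hX.norm_le_of_tendsto_coord hθ0.le hθ (u := fun m => v k - v m) ?_
      ((hne k).mono fun m hm => hsub hm)
    simpa only [map_sub] using hw.const_sub _
  have hsubw' (k : ι) : 1 ≤ ‖v k - w‖ := by
    have hsplit : (2 : ℝ) • v k = (v k + w) + (v k - w) := by
      rw [two_smul]
      abel
    have hnorm := hsplit ▸ norm_add_le (v k + w) (v k - w)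
    rw [norm_smul, hv, Real.norm_two] at hnorm
    linarith [haddw k]
  refine hX.exists_abs_coord_eq_one_of_tendsto hθ0 hθ (f := hyperfilter ι)
    (u := fun k => v k - w) ?_ hsubw' (hv r) (hsubw r) ((hne r).mono fun k hk => ?_)
  · simpa only [map_sub, sub_self] using hw.sub_const (hX.coord w)
  · rw [add_assoc, add_sub_cancel]
    exact hadd hk

end SchreierOne

section Sphere

open Metric

lemma isPeakSystem {n : ℕ} (hX : IsTsirelsonSpace θ n X e) (hθ0 : 0 ≤ θ) (hθ : θ ≤ 1 / 2) :
    IsPeakSystem e hX.coord where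
  injective := hX.coord_injective
  coord_basis := hX.coord_basis
  abs_coord_le := hX.abs_coord_le_norm hθ0 (by linarith)
  norm_sub_le x i := by
    refine hX.norm_le_norm_of_abs_coord_le hθ0 (by linarith) fun j => ?_
    obtain rfl | hij := eq_or_ne i j
    · simp [hX.coord_basis]
    · simp [hX.coord_basis, hij.symm]
  norm_smul_add_smul_le i j hij s t hs ht := by
    let a : ℕ+ → ℝ := fun k => if k = i then s else t
    have ha (k : ℕ+) : |a k| = 1 := by
      simp only [a]
      split_ifs
      exacts [hs, ht]
    have hsum : ∑ k ∈ {i, j}, a k • e k = s • e i + t • e j := by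
      rw [sum_pair hij, show a i = s from if_pos rfl, show a j = t from if_neg hij.symm]
    rw [← hsum]
    refine hX.norm_sum_smul_le_of_mul_sum_abs_le hθ0 (by linarith) zero_le_one
      (fun k _ => (ha k).le) ?_
    simp only [ha, sum_pair hij]
    linarith
  norm_add_smul_le x i t := by
    refine (hX.norm_add_smul_le hθ0 (by linarith) x i t).trans ?_
    rw [div_eq_inv_mul, ← one_div]
    gcongr

lemma exists_abs_coord_map_unit_eq_one (hX : IsTsirelsonSpace θ 1 X e) (hθ0 : 0 < θ)
    (hθ : θ ≤ 1) {ι Y : Type*} [Infinite ι] [DecidableEq ι] [NormedAddCommGroup Y]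
    [NormedSpace ℝ Y] {b : ι → Y} {c : Y →ₗ[ℝ] ι → ℝ} (hb : IsPeakSystem b c)
    (U : sphere (0 : Y) 1 ≃ᵢ sphere (0 : X) 1) (i : ι) :
    ∃ j, |hX.coord (U (hb.unit i)) j| = 1 := by
  refine hX.exists_abs_coord_eq_one hθ0 hθ (fun k => norm_eq_of_mem_sphere (U (hb.unit k)))
    (fun k m hkm => ?_) (fun k m hkm => ?_) i
  · have h := hb.dist_map_unit_smul_map_unit_le_one U (-1) hkm
    rwa [neg_one_smul_sphere, Subtype.dist_eq, dist_eq_norm, coe_neg_sphere, sub_neg_eq_add] at h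
  · have h := hb.dist_map_unit_smul_map_unit_le_one U 1 hkm
    rwa [one_smul, Subtype.dist_eq, dist_eq_norm] at h

end Sphere

section BasisSums

lemma proj_sum_basis {n : ℕ} (hX : IsTsirelsonSpace θ n X e) (A B : Finset ℕ+) :
    hX.proj A (∑ i ∈ B, e i) = ∑ i ∈ A ∩ B, e i := by
  simpa using hX.proj_sum_smul A B fun _ => 1

lemma norm_sum_basis_le_max {n : ℕ} (hX : IsTsirelsonSpace θ n X e) (hθ0 : 0 ≤ θ) (hθ : θ ≤ 1)
    (A : Finset ℕ+) : ‖∑ i ∈ A, e i‖ ≤ max 1 (θ * #A) := by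
  simpa using hX.norm_sum_smul_le_of_mul_sum_abs_le hθ0 hθ (A := A) (a := fun _ => 1)
    (c := max 1 (θ * #A)) (by positivity) (by simp) (by simp)

lemma norm_sum_basis_le_card {n : ℕ} (hX : IsTsirelsonSpace θ n X e) (hθ : θ ≤ 1)
    (A : Finset ℕ+) : ‖∑ i ∈ A, e i‖ ≤ #A := by
  simpa [hX.norm_basis hθ] using norm_sum_le A e

lemma norm_sum_basis_le_card_sub_one {n : ℕ} (hX : IsTsirelsonSpace θ n X e) (hθ0 : 0 ≤ θ)
    (hθ : θ ≤ 1 / 2) {A : Finset ℕ+} (hA : 2 ≤ #A) : ‖∑ i ∈ A, e i‖ ≤ #A - 1 := by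
  have hA' : (2 : ℝ) ≤ #A := mod_cast hA
  refine (hX.norm_sum_basis_le_max hθ0 (by linarith) A).trans (max_le (by linarith) ?_)
  linarith [mul_le_mul_of_nonneg_right hθ (Nat.cast_nonneg (α := ℝ) #A)]

lemma mul_card_le_norm_sum_basis (hX : IsTsirelsonSpace θ 1 X e) (hθ0 : 0 ≤ θ) (hθ : θ ≤ 1)
    {A : Finset ℕ+} (hA : ∀ a ∈ A, #A ≤ (a : ℕ)) : θ * #A ≤ ‖∑ i ∈ A, e i‖ := by
  let E (l : Fin #A) : Finset ℕ+ := {A.orderEmbOfFin rfl l}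
  have hE : TsAdmissible (Schreier 1) E := tsAdmissible_schreier_one_iff.2 ⟨fun l => by simp [E],
    fun l m hlm => by simpa [E] using hlm, fun l => by simpa [E] using hA _ (by simp)⟩
  have hnorm (l : Fin #A) : ‖hX.proj (E l) (∑ i ∈ A, e i)‖ = 1 := by
    rw [proj_sum_basis, singleton_inter_of_mem (orderEmbOfFin_mem A rfl l), sum_singleton,
      hX.norm_basis hθ]
  simpa only [hnorm, sum_const, card_fin, nsmul_one] using
    hX.mul_sum_norm_proj_le hθ0 hθ hE (∑ i ∈ A, e i)

/-- A family covering `A` has at most `j < #A` members, because `j` lies in one of them; so some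
member contains two points of `A`, and there the norm is at most the cardinality minus one. -/
lemma sum_norm_proj_sum_basis_le (hX : IsTsirelsonSpace θ 1 X e) (hθ0 : 0 ≤ θ) (hθ : θ ≤ 1 / 2)
    {A : Finset ℕ+} {j : ℕ+} (hjA : j ∈ A) (hj : (j : ℕ) < #A) {d : ℕ} {E : Fin d → Finset ℕ+}
    (hE : TsAdmissible (Schreier 1) E) :
    ∑ l, ‖hX.proj (E l) (∑ i ∈ A, e i)‖ ≤ #A - 1 := by
  have hcard : ∑ l, #(E l ∩ A) = #(univ.biUnion E ∩ A) := by
    rw [biUnion_inter, card_biUnion fun l _ m _ hlm =>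
      (hE.pairwise_disjoint hlm).mono inter_subset_left inter_subset_left]
  simp only [proj_sum_basis]
  have hle (l : Fin d) := hX.norm_sum_basis_le_card (by linarith) (E l ∩ A)
  by_cases hcover : A ⊆ univ.biUnion E
  · rw [inter_eq_right.2 hcover] at hcard
    obtain ⟨l, -, hl⟩ := mem_biUnion.1 (hcover hjA)
    obtain ⟨m, -, hm⟩ : ∃ m ∈ univ, 1 < #(E m ∩ A) := by
      refine exists_lt_of_sum_lt ?_
      rw [hcard, sum_const, card_fin, smul_eq_mul, mul_one]
      exact ((tsAdmissible_schreier_one_iff.1 hE).2.2 l j hl).trans_lt hj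
    rw [← hcard, Nat.cast_sum, ← add_sum_erase _ _ (mem_univ m), ← add_sum_erase _ _ (mem_univ m),
      add_sub_right_comm]
    gcongr with l
    exacts [hX.norm_sum_basis_le_card_sub_one hθ0 hθ hm, hle l]
  · have hlt : (#(univ.biUnion E ∩ A) : ℝ) + 1 ≤ #A :=
      mod_cast card_lt_card (inter_subset_right.ssubset_of_ne (mt inter_eq_right.1 hcover))
    have hsum := sum_le_sum fun l (_ : l ∈ univ) => hle l
    rw [← Nat.cast_sum, hcard] at hsum
    linarith

lemma norm_sum_basis_le_of_lt_card (hX : IsTsirelsonSpace θ 1 X e) (hθ0 : 0 ≤ θ) (hθ : θ ≤ 1 / 2)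
    {A : Finset ℕ+} {j : ℕ+} (hjA : j ∈ A) (hj : (j : ℕ) < #A) :
    ‖∑ i ∈ A, e i‖ ≤ max 1 (θ * (#A - 1)) := by
  refine hX.norm_le_of_long hθ0 (by linarith) (fun i => le_max_of_le_left ?_) fun d E hE _ =>
    le_max_of_le_right (mul_le_mul_of_nonneg_left ?_ hθ0)
  · have h := hX.coord_sum_smul A (fun _ => 1) i
    simp only [one_smul] at h
    rw [h]
    split_ifs <;> simp
  · exact hX.sum_norm_proj_sum_basis_le hθ0 hθ hjA hj hE

end BasisSums

section SignedPerm

open Metric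

variable {hX : IsTsirelsonSpace θ 1 X e} {he : IsPeakSystem e hX.coord}
  {U : sphere (0 : X) 1 ≃ᵢ sphere (0 : X) 1} {σ : ℕ+ → sphere (0 : ℝ) 1} {π : Equiv.Perm ℕ+}

lemma norm_sum_basis_le_norm_sum_basis_map (hθ0 : 0 ≤ θ) (hθ : θ ≤ 1)
    (hU : ActsBySignedPerm he he U σ π) (A : Finset ℕ+) :
    ‖∑ i ∈ A, e i‖ ≤ ‖∑ i ∈ A.map π.toEmbedding, e i‖ := by
  obtain rfl | ⟨a, ha⟩ := A.eq_empty_or_nonempty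
  · simp
  set y := ∑ i ∈ A.map π.toEmbedding, e i with hy
  have hcoordy (i : ℕ+) (hi : i ∈ A) : hX.coord y (π i) = 1 := by
    have h := hX.coord_sum_smul (A.map π.toEmbedding) (fun _ => 1) (π i)
    simpa only [one_smul, ← hy, mem_map_equiv, Equiv.symm_apply_apply, hi, if_true] using h
  have hy1 : 1 ≤ ‖y‖ := by
    simpa only [hcoordy a ha, abs_one] using hX.abs_coord_le_norm hθ0 hθ y (π a)
  have hy0 : y ≠ 0 := norm_pos_iff.1 (by linarith)
  let z : sphere (0 : X) 1 := ⟨‖y‖⁻¹ • y, mem_sphere_zero_iff_norm.2 (norm_smul_inv_norm hy0)⟩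
  have hcoordz (i : ℕ+) (hi : i ∈ A) : |hX.coord (U.symm z) i| = ‖y‖⁻¹ := by
    have h := congrArg abs (hU.coord_apply (U.symm z) i)
    rw [U.apply_symm_apply, abs_mul, abs_coe_unitSphere, one_mul] at h
    simp [← h, z, hcoordy i hi]
  have hnorm := hX.norm_sum_smul_le_of_abs_le hθ0 hθ (A := A) (a := fun _ => ‖y‖⁻¹)
    (x := U.symm z) fun i hi => by rw [hcoordz i hi, abs_inv, abs_norm]
  rw [← smul_sum, norm_smul, norm_inv, norm_norm, norm_eq_of_mem_sphere] at hnorm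
  rwa [inv_mul_le_one₀ (by linarith)] at hnorm

lemma le_signedPerm_apply (hθ0 : 0 < θ) (hθ : θ ≤ 1 / 2) (hU : ActsBySignedPerm he he U σ π)
    {i : ℕ+} (hi : θ⁻¹ < i) : i ≤ π i := by
  by_contra! hlt
  let A : Finset ℕ+ := Ico i (i + i)
  have hA : #A = i := by simp [A]
  have hiA : i ∈ A := left_mem_Ico.2 (PNat.lt_add_left i i)
  have hlower : θ * i ≤ ‖∑ k ∈ A, e k‖ := by
    rw [← hA]
    refine hX.mul_card_le_norm_sum_basis hθ0.le (by linarith) fun a ha => ?_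
    rw [hA]
    exact (mem_Ico.1 ha).1
  have hupper : ‖∑ k ∈ A.map π.toEmbedding, e k‖ ≤ max 1 (θ * (i - 1)) := by
    have h := hX.norm_sum_basis_le_of_lt_card hθ0.le hθ (A := A.map π.toEmbedding)
      (mem_map_of_mem _ hiA)
    rw [card_map, hA] at h
    exact h hlt
  have hmax := hlower.trans
    ((norm_sum_basis_le_norm_sum_basis_map hθ0.le (by linarith) hU A).trans hupper)
  refine hmax.not_gt (max_lt ?_ ?_)
  · exact (inv_lt_iff_one_lt_mul₀' hθ0).1 hi
  · gcongr
    linarith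

lemma signedPerm_apply_eq_self (hθ0 : 0 < θ) (hθ : θ ≤ 1 / 2)
    (hU : ActsBySignedPerm he he U σ π) {i : ℕ+} (hi : θ⁻¹ < i) : π i = i := by
  have hle := le_signedPerm_apply hθ0 hθ hU hi
  refine le_antisymm ?_ hle
  have hle' := le_signedPerm_apply hθ0 hθ hU.symm (hi.trans_le (Nat.cast_le.2 hle))
  rwa [Equiv.symm_apply_apply] at hle'

end SignedPerm

end IsTsirelsonSpace

theorem tsirelson_sphere_isometry_form_S1_general
    (θ : ℝ) (hθ0 : 0 < θ) (hθ : θ ≤ 1 / 2)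
    (X : Type*) [NormedAddCommGroup X] [NormedSpace ℝ X] (e : ℕ+ → X)
    (hX : IsTsirelsonSpace θ 1 X e)
    (U : Metric.sphere (0 : X) 1 → Metric.sphere (0 : X) 1)
    (hU : Isometry U) (hUsurj : Function.Surjective U) :
    ∃ (ε : ℕ+ → ℝ) (π : Equiv.Perm ℕ+),
      (∀ i, ε i = 1 ∨ ε i = -1) ∧
      (∀ i : ℕ+, θ⁻¹ < (i : ℕ) → π i = i) ∧
      ∀ (x : Metric.sphere (0 : X) 1) (a : ℕ+ → ℝ),
        HasSum (fun i => a i • e i) (x : X) →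
        HasSum (fun i => (ε i * a i) • e (π i)) ((U x : X)) := by
  let V : Metric.sphere (0 : X) 1 ≃ᵢ Metric.sphere (0 : X) 1 :=
    ⟨Equiv.ofBijective U ⟨hU.injective, hUsurj⟩, hU⟩
  have he := hX.isPeakSystem hθ0.le hθ
  obtain ⟨σ, π, hV⟩ := he.exists_actsBySignedPerm he
    (hX.exists_abs_coord_map_unit_eq_one hθ0 (by linarith) he V)
    (hX.exists_abs_coord_map_unit_eq_one hθ0 (by linarith) he V.symm)
  refine ⟨fun i => σ i, π, fun i => eq_or_eq_neg_of_abs_eq (abs_coe_unitSphere (σ i)),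
    fun i => IsTsirelsonSpace.signedPerm_apply_eq_self hθ0 hθ hV, fun x a ha => ?_⟩
  have hcoord (i : ℕ+) : hX.coord (U x : X) (π i) = σ i * a i := by
    rw [← hX.coord_eq_of_hasSum ha]
    exact hV.coord_apply x i
  simpa only [Function.comp_def, hcoord] using π.hasSum_iff.2 (hX.hasSum_coord (U x : X))

/-- For integer `θ⁻¹ = k ≥ 2`, every surjective isometry of the unit
sphere of `T[θ, S₁]` acts on basis expansions by `∑ aᵢ eᵢ ↦ ∑ εᵢ aᵢ e_{π i}`, with `π`
a permutation of `{1, …, θ⁻¹}` fixing all larger indices. -/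
theorem tsirelson_sphere_isometry_form_S1
    (θ : ℝ) (hθ0 : 0 < θ) (k : ℕ) (hk : 2 ≤ k) (hθk : θ⁻¹ = (k : ℝ))
    (X : Type*) [NormedAddCommGroup X] [NormedSpace ℝ X] (e : ℕ+ → X)
    (hX : IsTsirelsonSpace θ 1 X e)
    (U : Metric.sphere (0 : X) 1 → Metric.sphere (0 : X) 1)
    (hU : Isometry U) (hUsurj : Function.Surjective U) :
    ∃ (ε : ℕ+ → ℝ) (π : Equiv.Perm ℕ+),
      (∀ i, ε i = 1 ∨ ε i = -1) ∧
      (∀ i : ℕ+, k < (i : ℕ) → π i = i) ∧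
      ∀ (x : Metric.sphere (0 : X) 1) (a : ℕ+ → ℝ),
        HasSum (fun i => a i • e i) (x : X) →
        HasSum (fun i => (ε i * a i) • e (π i)) ((U x : X)) := by
  have hθ : θ ≤ 1 / 2 := by
    rw [one_div, le_inv_comm₀ hθ0 two_pos, hθk]
    exact_mod_cast hk
  simpa only [hθk, Nat.cast_lt] using
    tsirelson_sphere_isometry_form_S1_general θ hθ0 hθ X e hX U hU hUsurj
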